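/- Let 0 ≤ γ < 1, n > -3/2 and ν ∈ ℝ. Then ∫₀ˣ e^{-γt} t^{-ν} L_{ν+n}(t) dt is asymptotically equivalent to (1/(√(2π)(1−γ))) x^{-ν-1/2} e^{(1−γ)x} as x → ∞; that is, the ratio of the two quantities tends to 1 as x → ∞. -/

import Mathlib

/-- The modified Struve function of the first kind. -/
noncomputable def modStruveL (ν x : ℝ) : ℝ :=
  ∑' k : ℕ, (x / 2) ^ (ν + 2 * (k : ℝ) + 1) /
    (Real.Gamma ((k : ℝ) + 3 / 2) * Real.Gamma ((k : ℝ) + ν + 3 / 2))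

/-!
The asymptotics `L_μ(x) ~ e^x / √(2πx)` are read off the coefficients of the series. Everywhere
convergent power series with eventually positive, asymptotically equivalent coefficients are
asymptotically equivalent at `+∞`. By `Γ(k + a + 1) ~ k ^ a k!` and Legendre's duplication formula,
`Γ(k + 3/2) Γ(k + μ + 3/2)` may be replaced by a constant times `4⁻ᵏ Γ(2k + r + 1)` with
`r = μ + 3/2`, which turns the series into the fractional integral `C_r` of `cosh` of order `r`.
Since `e⁻ˣ (C_{r+1} + C_r)` is a regularized incomplete Gamma function, it tends to `1`; as
`(C_{r+1} + C_r) e^x` is the derivative of `C_{r+1} e^x`, l'Hôpital's rule gives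
`C_{r+1} ~ e^x / 2` for `r > 1`, and the recurrence `C_r = x ^ r / Γ(r + 1) + C_{r+2}` extends this
to every real order. L'Hôpital's rule once more carries the asymptotics of the integrand over to
its integral.
-/

open Filter Asymptotics Set Real MeasureTheory
open scoped Topology Nat

section LHopital

theorem isLittleO_of_hasDerivAt_isLittleO {E : Type*} [NormedAddCommGroup E] [NormedSpace ℝ E]
    {f f' : ℝ → E} {g g' : ℝ → ℝ} (hf : ∀ᶠ x in atTop, HasDerivAt f (f' x) x)
    (hg : ∀ᶠ x in atTop, HasDerivAt g (g' x) x) (hg' : ∀ᶠ x in atTop, 0 ≤ g' x)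
    (hg_top : Tendsto g atTop atTop) (h : f' =o[atTop] g') : f =o[atTop] g := by
  refine isLittleO_iff.2 fun ε hε => ?_
  obtain ⟨X, hX⟩ := eventually_atTop.1 (hf.and (hg.and (hg'.and (h.def (half_pos hε)))))
  have mean_value : ∀ x ≥ X, ‖f x‖ ≤ ‖f X‖ + ε / 2 * (g x - g X) := fun x hx =>
    image_norm_le_of_norm_deriv_right_le_deriv_boundary'
      (fun y hy => (hX y hy.1).1.continuousAt.continuousWithinAt)
      (fun y hy => (hX y hy.1).1.hasDerivWithinAt)
      (B := fun y => ‖f X‖ + ε / 2 * (g y - g X)) (by simp)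
      (fun y hy =>
        (((hX y hy.1).2.1.sub_const _).const_mul _).const_add _ |>.continuousAt.continuousWithinAt)
      (fun y hy => (((hX y hy.1).2.1.sub_const _).const_mul _).const_add _ |>.hasDerivWithinAt)
      (fun y hy => by
        obtain ⟨-, -, hpos, hle⟩ := hX y hy.1
        rwa [norm_of_nonneg hpos] at hle)
      ⟨hx, le_rfl⟩
  filter_upwards [eventually_ge_atTop X, hg_top.eventually_ge_atTop 0,
    (hg_top.const_mul_atTop (half_pos hε)).eventually_ge_atTop (‖f X‖ - ε / 2 * g X)]
    with x hx hgx hlarge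
  rw [norm_of_nonneg hgx]
  linarith [mean_value x hx]

theorem isEquivalent_of_hasDerivAt_isEquivalent {f f' g g' : ℝ → ℝ}
    (hf : ∀ᶠ x in atTop, HasDerivAt f (f' x) x) (hg : ∀ᶠ x in atTop, HasDerivAt g (g' x) x)
    (hg' : ∀ᶠ x in atTop, 0 ≤ g' x) (hg_top : Tendsto g atTop atTop) (h : f' ~[atTop] g') :
    f ~[atTop] g :=
  isLittleO_of_hasDerivAt_isLittleO (hf.mp (hg.mono fun _ hgx hfx => hfx.sub hgx)) hg hg' hg_top h

theorem tendsto_rpow_mul_exp_mul_atTop (p : ℝ) {c : ℝ} (hc : 0 < c) :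
    Tendsto (fun x => x ^ p * exp (c * x)) atTop atTop := by
  refine (tendsto_exp_mul_div_rpow_atTop (-p) c hc).congr' ?_
  filter_upwards [eventually_ge_atTop 0] with x hx
  rw [rpow_neg hx, div_inv_eq_mul, mul_comm]

theorem integral_isEquivalent_rpow_mul_exp {h : ℝ → ℝ} {a p c : ℝ} (hc : 0 < c)
    (hint : ∀ x, a < x → IntervalIntegrable h volume a x) (hcont : ContinuousOn h (Ioi a))
    (hequiv : h ~[atTop] fun x => x ^ p * exp (c * x)) :
    (fun x => ∫ t in a..x, h t) ~[atTop] fun x => x ^ p * exp (c * x) / c := by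
  have factor_tendsto : Tendsto (fun x : ℝ => 1 + p / c * x⁻¹) atTop (𝓝 1) := by
    simpa only [mul_zero, add_zero] using
      (tendsto_inv_atTop_zero.const_mul (p / c)).const_add (1 : ℝ)
  refine isEquivalent_of_hasDerivAt_isEquivalent (f' := h)
    (g' := fun x => x ^ p * exp (c * x) * (1 + p / c * x⁻¹)) ?_ ?_ ?_ ?_ ?_
  · filter_upwards [eventually_gt_atTop a] with x hx
    exact intervalIntegral.integral_hasDerivAt_right (hint x hx)
      (hcont.stronglyMeasurableAtFilter isOpen_Ioi x hx) (hcont.continuousAt (Ioi_mem_nhds hx))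
  · filter_upwards [eventually_gt_atTop 0] with x hx
    have hexp : HasDerivAt (fun x => exp (c * x)) (exp (c * x) * c) x := by
      simpa using ((hasDerivAt_id x).const_mul c).exp
    refine (((hasDerivAt_rpow_const (p := p) (.inl hx.ne')).mul hexp).div_const c).congr_deriv ?_
    rw [rpow_sub_one hx.ne']
    field_simp
    ring
  · filter_upwards [eventually_ge_atTop 0, factor_tendsto.eventually (lt_mem_nhds one_pos)]
      with x hx hfactor
    positivity
  · exact (tendsto_rpow_mul_exp_mul_atTop p hc).atTop_div_const hc
  · have factor_isEquivalent : (fun x : ℝ => 1 + p / c * x⁻¹) ~[atTop] fun _ => 1 :=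
      (isEquivalent_const_iff_tendsto one_ne_zero).2 factor_tendsto
    refine hequiv.trans (IsEquivalent.symm ?_)
    simpa only [Pi.mul_def, mul_one] using
      (IsEquivalent.refl (u := fun x => x ^ p * exp (c * x))).mul factor_isEquivalent

end LHopital

section PowerSeries

theorem continuous_tsum_mul_pow {a : ℕ → ℝ} (ha : ∀ x : ℝ, Summable fun k => a k * x ^ k) :
    Continuous fun x : ℝ => ∑' k, a k * x ^ k := by
  refine continuous_iff_continuousAt.2 fun x => ?_
  have hcont : ContinuousOn (fun y : ℝ => ∑' k, a k * y ^ k) (Metric.closedBall 0 (‖x‖ + 1)) := by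
    refine continuousOn_tsum (fun k => by fun_prop) (ha (‖x‖ + 1)).norm fun k y hy => ?_
    rw [norm_mul, norm_mul, norm_pow, norm_pow, norm_of_nonneg (by positivity : 0 ≤ ‖x‖ + 1)]
    gcongr
    exact mem_closedBall_zero_iff.1 hy
  exact hcont.continuousAt (Metric.closedBall_mem_nhds_of_mem (by simp))

variable {c d : ℕ → ℝ}

theorem pow_isLittleO_tsum_mul_pow (hd : ∀ᶠ k in atTop, 0 < d k)
    (hsum : ∀ x : ℝ, Summable fun k => d k * x ^ k) (n : ℕ) :
    (fun x : ℝ => x ^ n) =o[atTop] fun x => ∑' k, d k * x ^ k := by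
  obtain ⟨N, hN⟩ := eventually_atTop.1 hd
  set M := max N n + 1
  have hM : 0 < d M := hN M (by omega)
  have head_isLittleO :
      (fun x : ℝ => ∑ k ∈ Finset.range M, d k * x ^ k) =o[atTop] fun x => x ^ M :=
    .fun_sum fun k hk =>
      (isLittleO_pow_pow_atTop_of_lt (Finset.mem_range.1 hk)).const_mul_left _
  have pow_isBigO : (fun x : ℝ => x ^ M) =O[atTop] fun x => ∑' k, d k * x ^ k := by
    refine .of_bound (2 / d M) ?_
    filter_upwards [eventually_ge_atTop 0, head_isLittleO.def (half_pos hM)] with x hx hhead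
    have hxM : 0 ≤ x ^ M := pow_nonneg hx M
    have tail_ge : d M * x ^ M ≤ ∑' k, d (k + M) * x ^ (k + M) := by
      simpa only [zero_add] using ((summable_nat_add_iff M).2 (hsum x)).le_tsum 0 fun k _ =>
        mul_nonneg (hN (k + M) (by omega)).le (pow_nonneg hx _)
    rw [norm_of_nonneg hxM] at hhead ⊢
    have sum_ge : d M / 2 * x ^ M ≤ ∑' k, d k * x ^ k := by
      rw [← (hsum x).sum_add_tsum_nat_add M]
      linarith [neg_le_of_abs_le hhead]
    calc x ^ M = 2 / d M * (d M / 2 * x ^ M) := by field_simp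
      _ ≤ 2 / d M * ‖∑' k, d k * x ^ k‖ := by gcongr; exact sum_ge.trans (le_abs_self _)
  exact (isLittleO_pow_pow_atTop_of_lt (by omega : n < M)).trans_isBigO pow_isBigO

theorem sum_range_mul_pow_isLittleO_tsum (hd : ∀ᶠ k in atTop, 0 < d k)
    (hsum : ∀ x : ℝ, Summable fun k => d k * x ^ k) (c : ℕ → ℝ) (N : ℕ) :
    (fun x : ℝ => ∑ k ∈ Finset.range N, c k * x ^ k) =o[atTop] fun x => ∑' k, d k * x ^ k :=
  .fun_sum fun k _ => (pow_isLittleO_tsum_mul_pow hd hsum k).const_mul_left _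

theorem summable_mul_pow_of_isBigO (hsum : ∀ x : ℝ, Summable fun k => d k * x ^ k)
    (hcd : c =O[atTop] d) (x : ℝ) : Summable fun k => c k * x ^ k :=
  summable_of_isBigO_nat (hsum x) (hcd.mul (isBigO_refl _ _))

theorem tsum_mul_pow_isLittleO (hd : ∀ᶠ k in atTop, 0 < d k)
    (hsum : ∀ x : ℝ, Summable fun k => d k * x ^ k) (hcd : c =o[atTop] d) :
    (fun x : ℝ => ∑' k, c k * x ^ k) =o[atTop] fun x => ∑' k, d k * x ^ k := by
  refine isLittleO_iff.2 fun ε hε => ?_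
  obtain ⟨N, hN⟩ := eventually_atTop.1 (hd.and (hcd.def (by positivity : 0 < ε / 4)))
  filter_upwards [eventually_ge_atTop 0,
    (sum_range_mul_pow_isLittleO_tsum hd hsum c N).def (half_pos hε),
    (sum_range_mul_pow_isLittleO_tsum hd hsum d N).def one_pos] with x hx hc_head hd_head
  have tail_le : ‖∑' k, c (k + N) * x ^ (k + N)‖ ≤ ε / 4 * ∑' k, d (k + N) * x ^ (k + N) := by
    refine tsum_of_norm_bounded (((summable_nat_add_iff N).2 (hsum x)).hasSum.mul_left _) ?_
    intro k
    obtain ⟨hpos, hle⟩ := hN (k + N) (by omega)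
    rw [norm_of_nonneg hpos.le] at hle
    rw [norm_mul, norm_of_nonneg (pow_nonneg hx _), ← mul_assoc]
    gcongr
  have tail_eq := (hsum x).sum_add_tsum_nat_add N
  have tail_le_two_mul : ∑' k, d (k + N) * x ^ (k + N) ≤ 2 * ‖∑' k, d k * x ^ k‖ := by
    simp only [Real.norm_eq_abs] at hd_head ⊢
    linarith [neg_le_of_abs_le hd_head, le_abs_self (∑' k, d k * x ^ k)]
  calc ‖∑' k, c k * x ^ k‖
      = ‖∑ k ∈ Finset.range N, c k * x ^ k + ∑' k, c (k + N) * x ^ (k + N)‖ := by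
        rw [(summable_mul_pow_of_isBigO hsum hcd.isBigO x).sum_add_tsum_nat_add N]
    _ ≤ ε / 2 * ‖∑' k, d k * x ^ k‖ + ε / 4 * (2 * ‖∑' k, d k * x ^ k‖) :=
        (norm_add_le _ _).trans (by gcongr; exact tail_le.trans (by gcongr))
    _ = ε * ‖∑' k, d k * x ^ k‖ := by ring

theorem tsum_mul_pow_isEquivalent (hd : ∀ᶠ k in atTop, 0 < d k)
    (hsum : ∀ x : ℝ, Summable fun k => d k * x ^ k) (hcd : c ~[atTop] d) :
    (fun x : ℝ => ∑' k, c k * x ^ k) ~[atTop] fun x => ∑' k, d k * x ^ k := by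
  refine (tsum_mul_pow_isLittleO hd hsum hcd.isLittleO).congr_left fun x => ?_
  simp only [Pi.sub_apply, sub_mul]
  exact (summable_mul_pow_of_isBigO hsum hcd.isBigO x).tsum_sub (hsum x)

end PowerSeries

section Gamma

theorem Gamma_natCast_add_add_one_eq_mul_prod {a : ℝ} (ha : 0 < a) (k : ℕ) :
    Gamma (k + a + 1) = Gamma a * ∏ j ∈ Finset.range (k + 1), (a + j) := by
  induction k with
  | zero => simp [Gamma_add_one ha.ne', mul_comm]
  | succ k ih =>
    have hcast : ((k + 1 : ℕ) : ℝ) + a = k + a + 1 := by push_cast; ring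
    rw [Finset.prod_range_succ, ← mul_assoc, ← ih, add_comm a, hcast,
      Gamma_add_one (by positivity), mul_comm]

theorem Gamma_natCast_add_add_one_isEquivalent_of_pos {a : ℝ} (ha : 0 < a) :
    (fun k : ℕ => Gamma (k + a + 1)) ~[atTop] fun k => (k : ℝ) ^ a * k ! := by
  have hΓ : Gamma a ≠ 0 := (Gamma_pos_of_pos ha).ne'
  have hlim : Tendsto (fun k => Gamma a * (GammaSeq a k)⁻¹) atTop (𝓝 1) := by
    simpa only [mul_inv_cancel₀ hΓ] using ((GammaSeq_tendsto_Gamma a).inv₀ hΓ).const_mul (Gamma a)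
  refine isEquivalent_of_tendsto_one (hlim.congr fun k => ?_)
  rw [Pi.div_apply, Gamma_natCast_add_add_one_eq_mul_prod ha, GammaSeq, inv_div, mul_div_assoc]

theorem natCast_add_const_isEquivalent (b : ℝ) : (fun k : ℕ => (k : ℝ) + b) ~[atTop] Nat.cast :=
  IsEquivalent.refl.add_isLittleO
    (isLittleO_const_left.2 (.inr (tendsto_norm_atTop_atTop.comp tendsto_natCast_atTop_atTop)))

theorem Gamma_natCast_add_add_one_isEquivalent (a : ℝ) :
    (fun k : ℕ => Gamma (k + a + 1)) ~[atTop] fun k => (k : ℝ) ^ a * k ! := by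
  obtain ⟨m, hm⟩ := exists_nat_gt (-a)
  induction m generalizing a with
  | zero => exact Gamma_natCast_add_add_one_isEquivalent_of_pos (by simpa using hm)
  | succ m ih =>
    have hstep := (ih (a + 1) (by push_cast at hm; linarith)).div
      (natCast_add_const_isEquivalent (a + 1))
    refine (hstep.congr_left ?_).congr_right ?_
    · have hpos := (natCast_add_const_isEquivalent (a + 1)).symm.tendsto_atTop
        tendsto_natCast_atTop_atTop |>.eventually_gt_atTop 0
      filter_upwards [hpos] with k hk
      rw [← add_assoc] at hk
      rw [Pi.div_apply, ← add_assoc, Gamma_add_one hk.ne', mul_div_cancel_left₀ _ hk.ne']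
    · filter_upwards [eventually_gt_atTop 0] with k hk
      rw [Pi.div_apply, rpow_add_one (by positivity)]
      field_simp

/-- `1 / Γ` is entire and vanishes at the poles of `Γ`, where Mathlib's `Gamma` takes the value
`0`; this makes the recurrence hold for every `s`. -/
theorem inv_Gamma_eq_mul_inv_Gamma_add_one (s : ℝ) : (Gamma s)⁻¹ = s * (Gamma (s + 1))⁻¹ := by
  rcases eq_or_ne s 0 with rfl | hs
  · simp
  · rw [Gamma_add_one hs]
    field_simp

end Gamma

section FracCosh

theorem summable_inv_Gamma_mul_pow (r y : ℝ) :
    Summable fun k : ℕ => (Gamma (2 * k + r + 1))⁻¹ * y ^ k := by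
  have htop : Tendsto (fun k : ℕ => 2 * (k : ℝ) + r) atTop atTop :=
    tendsto_atTop_add_const_right _ _ (tendsto_natCast_atTop_atTop.const_mul_atTop two_pos)
  refine summable_of_ratio_norm_eventually_le one_half_lt_one ?_
  filter_upwards [htop.eventually_ge_atTop (2 * |y|), htop.eventually_ge_atTop 0] with k hky hk
  set s := 2 * (k : ℝ) + r
  have hΓ : (Gamma (s + 1))⁻¹ = (s + 1) * ((s + 1 + 1) * (Gamma (s + 1 + 1 + 1))⁻¹) := by
    rw [← inv_Gamma_eq_mul_inv_Gamma_add_one, ← inv_Gamma_eq_mul_inv_Gamma_add_one]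
  have hcast : 2 * ((k + 1 : ℕ) : ℝ) + r + 1 = s + 1 + 1 + 1 := by simp only [s]; push_cast; ring
  rw [hcast, hΓ, pow_succ]
  simp only [norm_mul, Real.norm_eq_abs, abs_of_nonneg (by linarith : 0 ≤ s + 1),
    abs_of_nonneg (by linarith : 0 ≤ s + 1 + 1)]
  have hratio : |y| ≤ 1 / 2 * ((s + 1) * (s + 1 + 1)) := by nlinarith
  calc |(Gamma (s + 1 + 1 + 1))⁻¹| * (|y ^ k| * |y|)
      ≤ |(Gamma (s + 1 + 1 + 1))⁻¹| * (|y ^ k| * (1 / 2 * ((s + 1) * (s + 1 + 1)))) := by gcongr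
    _ = _ := by ring

/-- The fractional integral of order `r` of `cosh` with base point `0`, that is
`x ^ r * E_{2, r + 1}(x ^ 2)` in terms of the two-parameter Mittag-Leffler function. The power of
`x` is kept outside the series so that it is defined for every real `r`, with vanishing
coefficients at the poles of `Γ`. -/
noncomputable def fracCosh (r x : ℝ) : ℝ :=
  x ^ r * ∑' k : ℕ, (Gamma (2 * k + r + 1))⁻¹ * (x ^ 2) ^ k

theorem fracCosh_zero_right {r : ℝ} (hr : r ≠ 0) : fracCosh r 0 = 0 := by
  rw [fracCosh, zero_rpow hr, zero_mul]

theorem continuous_fracCosh {r : ℝ} (hr : 0 ≤ r) : Continuous (fracCosh r) :=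
  (continuous_rpow_const hr).mul
    ((continuous_tsum_mul_pow (summable_inv_Gamma_mul_pow r)).comp (continuous_pow 2))

theorem rpow_mul_inv_Gamma_mul_pow (r : ℝ) {x : ℝ} (hx : 0 < x) (k : ℕ) :
    x ^ r * ((Gamma (2 * k + r + 1))⁻¹ * (x ^ 2) ^ k) =
      x ^ (2 * k + r) / Gamma (2 * k + r + 1) := by
  rw [add_comm _ r, rpow_add hx, ← pow_mul, ← rpow_natCast x (2 * k)]
  push_cast
  ring

theorem fracCosh_eq_tsum_rpow (r : ℝ) {x : ℝ} (hx : 0 < x) :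
    fracCosh r x = ∑' k : ℕ, x ^ (2 * k + r) / Gamma (2 * k + r + 1) := by
  simp only [fracCosh, ← tsum_mul_left, rpow_mul_inv_Gamma_mul_pow r hx]

theorem summable_rpow_div_Gamma (r : ℝ) {x : ℝ} (hx : 0 < x) :
    Summable fun k : ℕ => x ^ (2 * k + r) / Gamma (2 * k + r + 1) :=
  ((summable_inv_Gamma_mul_pow r (x ^ 2)).mul_left (x ^ r)).congr
    (rpow_mul_inv_Gamma_mul_pow r hx)

theorem hasDerivAt_fracCosh_add_one {r x : ℝ} (hr : 0 ≤ r) (hx : 0 < x) :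
    HasDerivAt (fracCosh (r + 1)) (fracCosh r x) x := by
  have hmem : x ∈ Ioo 0 (x + 1) := ⟨hx, lt_add_one x⟩
  have hderiv := hasDerivAt_tsum_of_isPreconnected
    (g := fun (k : ℕ) y => y ^ (2 * k + (r + 1)) / Gamma (2 * k + (r + 1) + 1))
    (g' := fun (k : ℕ) y => y ^ (2 * k + r) / Gamma (2 * k + r + 1))
    (summable_rpow_div_Gamma r (by linarith : 0 < x + 1)) isOpen_Ioo isPreconnected_Ioo
    (fun k y hy => ?_) (fun k y hy => ?_) hmem (summable_rpow_div_Gamma _ hx) hmem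
  · rw [fracCosh_eq_tsum_rpow r hx]
    refine hderiv.congr_of_eventuallyEq ?_
    filter_upwards [lt_mem_nhds hx] with y hy using fracCosh_eq_tsum_rpow _ hy
  · refine ((hasDerivAt_rpow_const (.inl hy.1.ne')).div_const _).congr_deriv ?_
    have hs : 2 * (k : ℝ) + r + 1 ≠ 0 := by positivity
    rw [← add_assoc, Gamma_add_one hs, add_sub_cancel_right, mul_div_mul_left _ _ hs]
  · have hΓ : 0 < Gamma (2 * k + r + 1) := Gamma_pos_of_pos (by positivity)
    rw [norm_of_nonneg (div_nonneg (rpow_nonneg hy.1.le _) hΓ.le)]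
    exact div_le_div_of_nonneg_right (rpow_le_rpow hy.1.le hy.2.le (by positivity)) hΓ.le

theorem fracCosh_eq_add_fracCosh_add_two (r : ℝ) {x : ℝ} (hx : 0 < x) :
    fracCosh r x = (Gamma (r + 1))⁻¹ * x ^ r + fracCosh (r + 2) x := by
  have hsucc (k : ℕ) : 2 * ((k + 1 : ℕ) : ℝ) + r + 1 = 2 * k + (r + 2) + 1 := by push_cast; ring
  rw [fracCosh, (summable_inv_Gamma_mul_pow r (x ^ 2)).tsum_eq_zero_add, fracCosh, rpow_add hx,
    rpow_two, mul_assoc (x ^ r), ← tsum_mul_left, mul_add]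
  congr 1
  · simp [mul_comm]
  · simp only [hsucc, pow_succ' (x ^ 2), mul_left_comm]

/-- `exp (-x) * (fracCosh (r + 1) x + fracCosh r x)` is the regularized lower incomplete Gamma
function of parameter `r`. -/
theorem fracCosh_add_one_add_fracCosh_mul_exp_neg {r x : ℝ} (hr : 1 < r) (hx : 0 < x) :
    (fracCosh (r + 1) x + fracCosh r x) * exp (-x) =
      (∫ t in (0 : ℝ)..x, exp (-t) * t ^ (r - 1)) / Gamma r := by
  have hint : IntervalIntegrable (fun t => exp (-t) * t ^ (r - 1) / Gamma r) volume 0 x := by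
    refine IntervalIntegrable.div_const ?_ _
    rw [intervalIntegrable_iff_integrableOn_Ioc_of_le hx.le]
    exact (GammaIntegral_convergent (by linarith)).mono_set Ioc_subset_Ioi_self
  have hcont : Continuous fun y => (fracCosh (r + 1) y + fracCosh r y) * exp (-y) :=
    ((continuous_fracCosh (by linarith)).add (continuous_fracCosh (by linarith))).mul (by fun_prop)
  rw [← intervalIntegral.integral_div, intervalIntegral.integral_eq_sub_of_hasDerivAt_of_le hx.le
    hcont.continuousOn (fun y hy => ?_) hint]
  · simp [fracCosh_zero_right (by linarith : r + 1 ≠ 0), fracCosh_zero_right (by linarith : r ≠ 0)]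
  · have hderiv : HasDerivAt (fracCosh r) (fracCosh (r - 1) y) y := by
      simpa only [sub_add_cancel] using
        hasDerivAt_fracCosh_add_one (by linarith : 0 ≤ r - 1) hy.1
    refine (((hasDerivAt_fracCosh_add_one (by linarith) hy.1).add hderiv).mul
      (hasDerivAt_neg y).exp).congr_deriv ?_
    rw [fracCosh_eq_add_fracCosh_add_two (r - 1) hy.1, sub_add_cancel,
      (by ring : r - 1 + 2 = r + 1), Pi.add_apply]
    ring

theorem fracCosh_add_one_add_fracCosh_isEquivalent {r : ℝ} (hr : 1 < r) :
    (fun x => fracCosh (r + 1) x + fracCosh r x) ~[atTop] exp := by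
  have hr₀ : 0 < r := by linarith
  have hlim := (intervalIntegral_tendsto_integral_Ioi 0 (GammaIntegral_convergent hr₀)
    tendsto_id).div_const (Gamma r)
  rw [← Gamma_eq_integral hr₀, div_self (Gamma_pos_of_pos hr₀).ne'] at hlim
  refine isEquivalent_of_tendsto_one (hlim.congr' ?_)
  filter_upwards [eventually_gt_atTop 0] with x hx
  rw [id, ← fracCosh_add_one_add_fracCosh_mul_exp_neg hr hx, exp_neg, Pi.div_apply,
    div_eq_mul_inv]

theorem fracCosh_isEquivalent_of_two_lt {r : ℝ} (hr : 2 < r) :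
    fracCosh r ~[atTop] fun x => exp x / 2 := by
  obtain ⟨s, rfl⟩ : ∃ s, r = s + 1 := ⟨r - 1, by ring⟩
  have hs : 1 < s := by linarith
  have hmul : (fun x => fracCosh (s + 1) x * exp x) ~[atTop] fun x => exp x / 2 * exp x := by
    refine isEquivalent_of_hasDerivAt_isEquivalent
      (f' := fun x => (fracCosh (s + 1) x + fracCosh s x) * exp x)
      (g' := fun x => exp x * exp x) ?_ ?_ ?_ ?_ ?_
    · filter_upwards [eventually_gt_atTop 0] with x hx
      refine ((hasDerivAt_fracCosh_add_one (by linarith) hx).mul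
        (hasDerivAt_exp x)).congr_deriv ?_
      ring
    · refine .of_forall fun x => ?_
      refine (((hasDerivAt_exp x).div_const 2).mul (hasDerivAt_exp x)).congr_deriv ?_
      ring
    · exact .of_forall fun x => by positivity
    · exact (tendsto_exp_atTop.atTop_div_const two_pos).atTop_mul_atTop₀ tendsto_exp_atTop
    · exact (fracCosh_add_one_add_fracCosh_isEquivalent hs).mul IsEquivalent.refl
  refine (hmul.div (IsEquivalent.refl (u := exp))).congr_left ?_ |>.congr_right ?_ <;>
    exact .of_forall fun x => mul_div_cancel_right₀ _ (exp_ne_zero x)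

theorem fracCosh_isEquivalent (r : ℝ) : fracCosh r ~[atTop] fun x => exp x / 2 := by
  obtain ⟨m, hm⟩ := exists_nat_gt (2 - r)
  induction m generalizing r with
  | zero => exact fracCosh_isEquivalent_of_two_lt (by simpa using hm)
  | succ m ih =>
    have hrpow : (fun x => (Gamma (r + 1))⁻¹ * x ^ r) =o[atTop] fun x => exp x / 2 := by
      simpa [div_eq_mul_inv, mul_comm, isLittleO_const_mul_right_iff] using
        (isLittleO_rpow_exp_pos_mul_atTop r one_pos).const_mul_left (Gamma (r + 1))⁻¹
    refine ((ih (r + 2) (by push_cast at hm; linarith)).add_isLittleO hrpow).congr_left ?_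
    filter_upwards [eventually_gt_atTop 0] with x hx
    rw [fracCosh_eq_add_fracCosh_add_two r hx, Pi.add_apply, add_comm]

end FracCosh

section ModStruve

/-- The coefficients of `(x / 2) ^ (-(μ + 1)) * modStruveL μ x` as a power series in `x ^ 2`. -/
noncomputable def modStruveCoeff (μ : ℝ) (k : ℕ) : ℝ :=
  (1 / 4) ^ k / (Gamma (k + 3 / 2) * Gamma (k + μ + 3 / 2))

theorem modStruveL_eq_rpow_mul_tsum (μ : ℝ) {x : ℝ} (hx : 0 < x) :
    modStruveL μ x = (x / 2) ^ (μ + 1) * ∑' k, modStruveCoeff μ k * (x ^ 2) ^ k := by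
  rw [modStruveL, ← tsum_mul_left]
  refine tsum_congr fun k => ?_
  have hpow : (x / 2) ^ (μ + 2 * k + 1) = (x / 2) ^ (μ + 1) * ((1 / 4) ^ k * (x ^ 2) ^ k) := by
    rw [← mul_pow, (by ring : 1 / 4 * x ^ 2 = (x / 2) ^ 2), ← pow_mul,
      ← rpow_add_natCast (by positivity)]
    push_cast
    ring_nf
  rw [hpow, modStruveCoeff]
  ring

theorem Gamma_two_mul_eq (s : ℝ) :
    Gamma (2 * s) = 2 ^ (2 * s - 1) / √π * (Gamma s * Gamma (s + 1 / 2)) := by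
  have hexp : (2 : ℝ) ^ (2 * s - 1) * 2 ^ (1 - 2 * s) = 1 := by
    rw [← rpow_add two_pos]
    simp
  rw [Gamma_mul_Gamma_add_half]
  field_simp
  linear_combination -Gamma (2 * s) * hexp

theorem Gamma_mul_Gamma_isEquivalent {a b c d : ℝ} (h : a + b = c + d) :
    (fun k : ℕ => Gamma (k + a + 1) * Gamma (k + b + 1)) ~[atTop]
      fun k => Gamma (k + c + 1) * Gamma (k + d + 1) := by
  refine ((Gamma_natCast_add_add_one_isEquivalent a).mul
    (Gamma_natCast_add_add_one_isEquivalent b)).trans <|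
    .trans (EventuallyEq.isEquivalent ?_) ((Gamma_natCast_add_add_one_isEquivalent c).mul
      (Gamma_natCast_add_add_one_isEquivalent d)).symm
  filter_upwards [eventually_gt_atTop 0] with k hk
  have hk' : (0 : ℝ) < k := Nat.cast_pos.2 hk
  simp only [Pi.mul_apply, mul_mul_mul_comm _ ((k ! : ℕ) : ℝ), ← rpow_add hk', h]

theorem modStruveCoeff_isEquivalent (μ : ℝ) :
    modStruveCoeff μ ~[atTop]
      fun k => 2 ^ (μ + 3 / 2) / √π * (Gamma (2 * k + (μ + 3 / 2) + 1))⁻¹ := by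
  have hΓ := (Gamma_mul_Gamma_isEquivalent
    (by ring : 1 / 2 + (μ + 1 / 2) = (μ / 2 + 1 / 4) + (μ / 2 + 3 / 4))).inv
  refine ((IsEquivalent.refl (u := fun k : ℕ => (1 / 4 : ℝ) ^ k)).mul hΓ).congr_left ?_
    |>.congr_right ?_
  · refine .of_forall fun k => ?_
    simp only [Pi.mul_apply, Pi.inv_apply, modStruveCoeff, div_eq_mul_inv]
    ring_nf
  · refine .of_forall fun k => ?_
    have hdup := Gamma_two_mul_eq (k + (μ / 2 + 1 / 4) + 1)
    have hpow : (2 : ℝ) ^ (2 * (k + (μ / 2 + 1 / 4) + 1) - 1) = 2 ^ (μ + 3 / 2) * 4 ^ k := by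
      rw [(by norm_num : (4 : ℝ) = 2 ^ 2), ← pow_mul, ← rpow_add_natCast two_ne_zero]
      push_cast
      ring_nf
    have harg : 2 * (k : ℝ) + (μ + 3 / 2) + 1 = 2 * (k + (μ / 2 + 1 / 4) + 1) := by ring
    have harg' : (k : ℝ) + (μ / 2 + 3 / 4) + 1 = k + (μ / 2 + 1 / 4) + 1 + 1 / 2 := by ring
    simp only [Pi.mul_apply, Pi.inv_apply]
    rw [harg, harg', hdup, hpow, one_div_pow, mul_inv (_ / _), inv_div]
    field_simp

theorem modStruveCoeff_isBigO (μ : ℝ) :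
    modStruveCoeff μ =O[atTop] fun k => (Gamma (2 * k + (μ + 3 / 2) + 1))⁻¹ :=
  (modStruveCoeff_isEquivalent μ).isBigO.trans (isBigO_const_mul_self _ _ _)

theorem summable_modStruveCoeff_mul_pow (μ y : ℝ) :
    Summable fun k => modStruveCoeff μ k * y ^ k :=
  summable_mul_pow_of_isBigO (summable_inv_Gamma_mul_pow _) (modStruveCoeff_isBigO μ) y

theorem continuous_tsum_modStruveCoeff (μ : ℝ) :
    Continuous fun x : ℝ => ∑' k, modStruveCoeff μ k * (x ^ 2) ^ k :=
  (continuous_tsum_mul_pow (summable_modStruveCoeff_mul_pow μ)).comp (continuous_pow 2)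

theorem continuousOn_modStruveL (μ : ℝ) : ContinuousOn (modStruveL μ) (Ioi 0) := by
  have hprefactor : ContinuousOn (fun x : ℝ => (x / 2) ^ (μ + 1)) (Ioi 0) :=
    (continuousOn_id.div_const 2).rpow_const fun x hx => .inl (half_pos hx).ne'
  exact (hprefactor.mul (continuous_tsum_modStruveCoeff μ).continuousOn).congr
    fun x hx => modStruveL_eq_rpow_mul_tsum μ hx

theorem intervalIntegrable_rpow_mul_modStruveL {s μ x : ℝ} (hsμ : -2 < s + μ) (hx : 0 ≤ x) :
    IntervalIntegrable (fun t => t ^ s * modStruveL μ t) volume 0 x := by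
  have hint : IntervalIntegrable (fun t : ℝ => t ^ (s + μ + 1) *
      ((1 / 2) ^ (μ + 1) * ∑' k, modStruveCoeff μ k * (t ^ 2) ^ k)) volume 0 x :=
    (intervalIntegral.intervalIntegrable_rpow' (by linarith)).mul_continuousOn
      (continuous_const.mul (continuous_tsum_modStruveCoeff μ)).continuousOn
  refine hint.congr fun t ht => ?_
  rw [uIoc_of_le hx] at ht
  rw [modStruveL_eq_rpow_mul_tsum μ ht.1, add_assoc, rpow_add ht.1, div_eq_mul_one_div t,
    mul_rpow ht.1.le one_half_pos.le]
  ring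

theorem tsum_modStruveCoeff_isEquivalent (μ : ℝ) :
    (fun y : ℝ => ∑' k, modStruveCoeff μ k * y ^ k) ~[atTop]
      fun y => 2 ^ (μ + 3 / 2) / √π * ∑' k : ℕ, (Gamma (2 * k + (μ + 3 / 2) + 1))⁻¹ * y ^ k := by
  have htop : Tendsto (fun k : ℕ => 2 * (k : ℝ) + (μ + 3 / 2)) atTop atTop :=
    tendsto_atTop_add_const_right _ _ (tendsto_natCast_atTop_atTop.const_mul_atTop two_pos)
  have hpos : ∀ᶠ k : ℕ in atTop,
      0 < 2 ^ (μ + 3 / 2) / √π * (Gamma (2 * k + (μ + 3 / 2) + 1))⁻¹ := by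
    filter_upwards [htop.eventually_ge_atTop 0] with k hk
    have hΓ := Gamma_pos_of_pos (by linarith : 0 < 2 * (k : ℝ) + (μ + 3 / 2) + 1)
    exact mul_pos (by positivity) (inv_pos.2 hΓ)
  simpa only [mul_assoc, tsum_mul_left] using tsum_mul_pow_isEquivalent hpos
    (fun y => by simpa only [mul_assoc] using (summable_inv_Gamma_mul_pow _ y).mul_left _)
    (modStruveCoeff_isEquivalent μ)

theorem half_rpow_mul_two_rpow_div_sqrt_pi (μ : ℝ) {x : ℝ} (hx : 0 < x) :
    (x / 2) ^ (μ + 1) * (2 ^ (μ + 3 / 2) / √π) = 2 / √(2 * π * x) * x ^ (μ + 3 / 2) := by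
  have hsplit {y : ℝ} (hy : 0 < y) : y ^ (μ + 3 / 2) = y ^ (μ + 1) * √y := by
    rw [sqrt_eq_rpow, ← rpow_add hy]
    ring_nf
  rw [hsplit hx, hsplit two_pos, div_rpow hx.le two_pos.le, sqrt_mul (by positivity),
    sqrt_mul two_pos.le]
  field_simp
  rw [sq_sqrt two_pos.le]

theorem modStruveL_isEquivalent (μ : ℝ) :
    modStruveL μ ~[atTop] fun x => exp x / √(2 * π * x) := by
  have hseries := (IsEquivalent.refl (u := fun x : ℝ => (x / 2) ^ (μ + 1))).mul
    ((tsum_modStruveCoeff_isEquivalent μ).comp_tendsto (tendsto_pow_atTop (α := ℝ) two_ne_zero))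
  have hfracCosh : modStruveL μ ~[atTop] fun x => 2 / √(2 * π * x) * fracCosh (μ + 3 / 2) x := by
    refine hseries.congr_left ?_ |>.congr_right ?_
    · filter_upwards [eventually_gt_atTop 0] with x hx
      exact (modStruveL_eq_rpow_mul_tsum μ hx).symm
    · filter_upwards [eventually_gt_atTop 0] with x hx
      simp only [Pi.mul_apply, Function.comp_apply, fracCosh]
      rw [← mul_assoc, half_rpow_mul_two_rpow_div_sqrt_pi μ hx, mul_assoc]
  refine (hfracCosh.trans (IsEquivalent.refl.mul (fracCosh_isEquivalent _))).congr_right ?_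
  refine .of_forall fun x => ?_
  simp only [Pi.mul_apply]
  ring

theorem exp_mul_rpow_mul_modStruveL_isEquivalent (γ s μ : ℝ) :
    (fun t => √(2 * π) * (exp (-γ * t) * (t ^ s * modStruveL μ t))) ~[atTop]
      fun t => t ^ (s - 1 / 2) * exp ((1 - γ) * t) := by
  have hmul := (IsEquivalent.refl (u := fun t => √(2 * π) * (exp (-γ * t) * t ^ s))).mul
    (modStruveL_isEquivalent μ)
  refine hmul.congr_left (.of_forall fun t => ?_) |>.congr_right ?_
  · simp only [Pi.mul_apply]
    ring
  · filter_upwards [eventually_gt_atTop 0] with t ht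
    have hexp : exp ((1 - γ) * t) = exp (-γ * t) * exp t := by
      rw [← exp_add]
      ring_nf
    rw [Pi.mul_apply, hexp, rpow_sub ht, ← sqrt_eq_rpow,
      sqrt_mul (by positivity : 0 ≤ 2 * π)]
    field_simp

theorem integral_exp_mul_rpow_mul_modStruveL_isEquivalent {γ s μ : ℝ} (hγ : γ < 1)
    (hsμ : -2 < s + μ) :
    (fun x => ∫ t in (0 : ℝ)..x, √(2 * π) * (exp (-γ * t) * (t ^ s * modStruveL μ t))) ~[atTop]
      fun x => x ^ (s - 1 / 2) * exp ((1 - γ) * x) / (1 - γ) := by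
  have hexp : Continuous fun t => exp (-γ * t) := by fun_prop
  refine integral_isEquivalent_rpow_mul_exp (sub_pos.2 hγ) (fun x hx => ?_) ?_
    (exp_mul_rpow_mul_modStruveL_isEquivalent γ s μ)
  · exact ((intervalIntegrable_rpow_mul_modStruveL hsμ hx.le).continuousOn_mul
      hexp.continuousOn).const_mul _
  · have hrpow : ContinuousOn (fun t : ℝ => t ^ s) (Ioi 0) :=
      continuousOn_id.rpow_const fun t ht => .inl (ne_of_gt ht)
    exact continuousOn_const.mul
      (hexp.continuousOn.mul (hrpow.mul (continuousOn_modStruveL μ)))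

end ModStruve

theorem struve_exp_integral_asymptotic_infinity_general (γ n ν : ℝ) (hγ : γ < 1) (hn : -2 < n) :
    Tendsto
      (fun x : ℝ =>
        (∫ t in (0 : ℝ)..x, exp (-γ * t) * (t ^ (-ν) * modStruveL (ν + n) t)) /
          ((1 / (√(2 * π) * (1 - γ))) * x ^ (-ν - 1 / 2) * exp ((1 - γ) * x)))
      atTop (𝓝 1) := by
  have hequiv := integral_exp_mul_rpow_mul_modStruveL_isEquivalent (s := -ν) (μ := ν + n) hγ
    (by linarith)
  have hγ' : 0 < 1 - γ := sub_pos.2 hγ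
  have hne : ∀ᶠ x : ℝ in atTop, x ^ (-ν - 1 / 2) * exp ((1 - γ) * x) / (1 - γ) ≠ 0 := by
    filter_upwards [eventually_gt_atTop 0] with x hx
    positivity
  refine ((isEquivalent_iff_tendsto_one hne).1 hequiv).congr fun x => ?_
  rw [Pi.div_apply, intervalIntegral.integral_const_mul]
  field_simp

theorem struve_exp_integral_asymptotic_infinity (γ n ν : ℝ) (hγ1 : 0 ≤ γ) (hγ2 : γ < 1)
    (hn : n > -(3 / 2)) :
    Filter.Tendsto
      (fun x : ℝ =>
        (∫ t in (0 : ℝ)..x, Real.exp (-γ * t) * (t ^ (-ν) * modStruveL (ν + n) t)) /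
          ((1 / (Real.sqrt (2 * Real.pi) * (1 - γ))) * x ^ (-ν - 1 / 2) *
            Real.exp ((1 - γ) * x)))
      Filter.atTop (nhds 1) :=
  struve_exp_integral_asymptotic_infinity_general γ n ν hγ2 (by linarith)
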